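/- Let m ∈ ℂ ∖ ℤ with Re(m) > −1 and k ∈ ℂ with Re(k) > 0. Define the Bessel resolvent kernel G(x,y) := (1/k)·𝓘_m(k·min(x,y))·𝓚_m(k·max(x,y)) for x, y > 0. Then for every continuous f : ]0,∞[ → ℂ with compact support in ]0,∞[, the function u(x) := ∫_0^∞ G(x,y) f(y) dy is twice continuously differentiable on ]0,∞[ and satisfies −u''(x) + (m² − 1/4)·x^{−2}·u(x) + k²·u(x) = f(x) for all x > 0. -/

import Mathlib

open Complex Set MeasureTheory

/-- Olver-normalized hypergeometric function `₀𝐅₁(c; w) = ∑ wⁿ/(n! Γ(c+n))`. -/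
noncomputable def zeroF1reg (c w : ℂ) : ℂ :=
  ∑' n : ℕ, w ^ n / ((n.factorial : ℂ) * Complex.Gamma (c + n))

/-- Hyperbolic 1d Bessel function `𝓘_m(z) = √π (z/2)^{1/2+m} ₀𝐅₁(m+1; z²/4)`
(principal branch powers). -/
noncomputable def besselI1d (m z : ℂ) : ℂ :=
  (Real.sqrt Real.pi : ℂ) * (z / 2) ^ ((1 : ℂ) / 2 + m) * zeroF1reg (m + 1) (z ^ 2 / 4)

/-- 1d Macdonald function `𝓚_m(z) = (𝓘_{-m}(z) - 𝓘_m(z))/sin(π m)` for `m ∉ ℤ`. -/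
noncomputable def macdonaldK1d (m z : ℂ) : ℂ :=
  (besselI1d (-m) z - besselI1d m z) / Complex.sin (Real.pi * m)

/-!
Both `𝓘_m` and `𝓘_{-m}` solve `y'' = ((m² - 1/4) z⁻² + 1) y`; this follows from the classical
recurrences `𝓘_m' = (m + 1/2) z⁻¹ 𝓘_m + 𝓘_{m+1}` and `𝓘_m = 2 (m + 1) z⁻¹ 𝓘_{m+1} + 𝓘_{m+2}`,
which come from the power series. Their Wronskian is `𝓘_m 𝓘_{-m-1} - 𝓘_{m+1} 𝓘_{-m}`, which is
`π (F_c F_{1-c} - w F_{c+1} F_{2-c})` with `F_c = ₀𝐅₁(c; w)`, `c = m + 1` and `w = z² / 4`. The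
bracket is an entire function of `w` with zero derivative, and at `w = 0` the reflection formula for
`Γ` gives its value `sin (π c) / π`. Hence `𝓘_m` and `𝓚_m` have Wronskian `-1`, and the theorem
follows by variation of parameters.
-/

open scoped Topology

section ZeroF1

theorem bddAbove_range_norm_inv_Gamma_add_natCast (c : ℂ) :
    BddAbove (range fun n : ℕ => ‖(Gamma (c + n))⁻¹‖) := by
  obtain ⟨N, hN⟩ := exists_nat_ge (‖c‖ + 1)
  have antitone : AntitoneOn (fun n : ℕ => ‖(Gamma (c + n))⁻¹‖) (Ici N) := by
    refine antitoneOn_nat_Ici_of_succ_le fun n hn => ?_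
    have one_le : 1 ≤ ‖c + n‖ := by
      have h := norm_sub_le (c + n) c
      rw [add_sub_cancel_left, norm_natCast] at h
      have : (N : ℝ) ≤ n := by exact_mod_cast hn
      linarith
    rw [one_div_Gamma_eq_self_mul_one_div_Gamma_add_one (c + n), norm_mul, Nat.cast_succ,
      ← add_assoc]
    exact le_mul_of_one_le_left (norm_nonneg _) one_le
  refine Filter.IsBoundedUnder.bddAbove_range
    (Filter.isBoundedUnder_of_eventually_le (a := ‖(Gamma (c + N))⁻¹‖) ?_)
  filter_upwards [Filter.eventually_ge_atTop N] with n hn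
  exact antitone self_mem_Ici hn hn

theorem exists_norm_zeroF1reg_term_le (c : ℂ) :
    ∃ C : ℝ, 0 ≤ C ∧ ∀ (w : ℂ) (n : ℕ),
      ‖w ^ n / (n.factorial * Gamma (c + n))‖ ≤ ‖w‖ ^ n / n.factorial * C := by
  obtain ⟨C, hC⟩ := bddAbove_range_norm_inv_Gamma_add_natCast c
  refine ⟨C, (norm_nonneg _).trans (hC (mem_range_self 0)), fun w n => ?_⟩
  rw [div_mul_eq_div_mul_one_div, one_div, norm_mul, norm_div, norm_pow, norm_natCast]
  gcongr
  exact hC (mem_range_self n)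

theorem hasSum_zeroF1reg (c w : ℂ) :
    HasSum (fun n : ℕ => w ^ n / (n.factorial * Gamma (c + n))) (zeroF1reg c w) := by
  obtain ⟨C, -, hC⟩ := exists_norm_zeroF1reg_term_le c
  exact (Summable.of_norm_bounded ((Real.summable_pow_div_factorial ‖w‖).mul_right C)
    (hC w)).hasSum

theorem zeroF1reg_zero (c : ℂ) : zeroF1reg c 0 = (Gamma c)⁻¹ := by
  rw [zeroF1reg, tsum_eq_single 0 fun n hn => by simp [hn]]
  simp

theorem hasSum_zeroF1reg_add_one (c w : ℂ) :
    HasSum (fun n : ℕ => n * w ^ (n - 1) / (n.factorial * Gamma (c + n)))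
      (zeroF1reg (c + 1) w) := by
  rw [← hasSum_nat_add_iff' 1]
  simp only [Finset.range_one, Finset.sum_singleton, Nat.cast_zero, zero_mul, zero_div, sub_zero,
    Nat.add_sub_cancel]
  refine (hasSum_zeroF1reg (c + 1) w).congr_fun fun n => ?_
  rw [Nat.factorial_succ, Nat.cast_mul, mul_assoc,
    mul_div_mul_left _ _ (Nat.cast_ne_zero.2 n.succ_ne_zero), Nat.cast_succ, add_right_comm,
    add_assoc]

theorem hasDerivAt_zeroF1reg (c w : ℂ) : HasDerivAt (zeroF1reg c) (zeroF1reg (c + 1) w) w := by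
  obtain ⟨C, C_nonneg, hC⟩ := exists_norm_zeroF1reg_term_le c
  let term (n : ℕ) (z : ℂ) : ℂ := z ^ n / (n.factorial * Gamma (c + n))
  let bound (n : ℕ) : ℝ := (‖w‖ + 1) ^ n / n.factorial * C
  have summable_bound : Summable bound := (Real.summable_pow_div_factorial _).mul_right _
  have term_le (n : ℕ) (z : ℂ) (hz : z ∈ Metric.ball 0 (‖w‖ + 1)) : ‖term n z‖ ≤ bound n := by
    rw [mem_ball_zero_iff] at hz
    calc ‖term n z‖ ≤ ‖z‖ ^ n / n.factorial * C := hC z n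
      _ ≤ (‖w‖ + 1) ^ n / n.factorial * C := by gcongr
  have differentiable_term (n : ℕ) : DifferentiableOn ℂ (term n) (Metric.ball 0 (‖w‖ + 1)) := by
    fun_prop
  have mem_ball : w ∈ Metric.ball 0 (‖w‖ + 1) := by simp
  have differentiableAt : DifferentiableAt ℂ (zeroF1reg c) w :=
    (differentiableOn_tsum_of_summable_norm summable_bound differentiable_term Metric.isOpen_ball
      term_le).differentiableAt (Metric.isOpen_ball.mem_nhds mem_ball)
  have hasSum_deriv : HasSum (fun n => deriv (term n) w) (deriv (zeroF1reg c) w) :=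
    hasSum_deriv_of_summable_norm summable_bound differentiable_term Metric.isOpen_ball term_le
      mem_ball
  have deriv_term (n : ℕ) :
      deriv (term n) w = n * w ^ (n - 1) / (n.factorial * Gamma (c + n)) := by
    simp [term]
  simp only [deriv_term] at hasSum_deriv
  rw [(hasSum_zeroF1reg_add_one c w).unique hasSum_deriv]
  exact differentiableAt.hasDerivAt

theorem zeroF1reg_eq_add (c w : ℂ) :
    zeroF1reg c w = c * zeroF1reg (c + 1) w + w * zeroF1reg (c + 2) w := by
  have hasSum_right := ((hasSum_zeroF1reg (c + 1) w).mul_left c).add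
    ((hasSum_zeroF1reg_add_one (c + 1) w).mul_left w)
  rw [add_assoc c 1 1, one_add_one_eq_two] at hasSum_right
  refine (hasSum_zeroF1reg c w).unique (hasSum_right.congr_fun fun n => ?_)
  have inv_Gamma := one_div_Gamma_eq_self_mul_one_div_Gamma_add_one (c + n)
  rw [add_right_comm] at inv_Gamma
  have mul_pow_pred : w * (n * w ^ (n - 1)) = n * w ^ n := by
    rcases n with _ | n
    · simp
    · rw [Nat.add_sub_cancel, pow_succ]; ring
  rw [← mul_div_assoc w, mul_pow_pred]
  simp only [div_eq_mul_inv, mul_inv, inv_Gamma]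
  ring

theorem zeroF1reg_mul_sub_eq_sin_div_pi (c w : ℂ) :
    zeroF1reg c w * zeroF1reg (1 - c) w - w * (zeroF1reg (c + 1) w * zeroF1reg (2 - c) w) =
      sin (Real.pi * c) / Real.pi := by
  let P (w : ℂ) : ℂ :=
    zeroF1reg c w * zeroF1reg (1 - c) w - w * (zeroF1reg (c + 1) w * zeroF1reg (2 - c) w)
  have hasDerivAt_zero (w : ℂ) : HasDerivAt P 0 w := by
    have deriv₁ := hasDerivAt_zeroF1reg (c + 1) w
    have deriv₂ := hasDerivAt_zeroF1reg (1 - c) w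
    have recurrence₁ := zeroF1reg_eq_add c w
    have recurrence₂ := zeroF1reg_eq_add (1 - c) w
    rw [show c + 1 + 1 = c + 2 by ring] at deriv₁
    rw [show 1 - c + 1 = 2 - c by ring] at deriv₂ recurrence₂
    rw [show 1 - c + 2 = 2 - c + 1 by ring] at recurrence₂
    refine (((hasDerivAt_zeroF1reg c w).mul deriv₂).sub ((hasDerivAt_id w).mul
      (deriv₁.mul (hasDerivAt_zeroF1reg (2 - c) w)))).congr_deriv ?_
    simp only [id, Pi.mul_apply]
    linear_combination zeroF1reg (2 - c) w * recurrence₁ + zeroF1reg (c + 1) w * recurrence₂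
  calc P w = P 0 :=
        is_const_of_deriv_eq_zero (fun w => (hasDerivAt_zero w).differentiableAt)
          (fun w => (hasDerivAt_zero w).deriv) w 0
    _ = (Gamma c * Gamma (1 - c))⁻¹ := by simp [P, zeroF1reg_zero, mul_comm]
    _ = sin (Real.pi * c) / Real.pi := by rw [Gamma_mul_Gamma_one_sub, inv_div]

end ZeroF1

section SecondOrderEquation

variable {𝕂 R : Type*} [NontriviallyNormedField 𝕂] [NormedCommRing R] [NormedAlgebra 𝕂 R]

/-- The function `y`, with derivative `y'`, solves the linear equation `y'' = q y` on `s`. -/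
structure SolvesSchrodingerOn (q y y' : 𝕂 → R) (s : Set 𝕂) : Prop where
  hasDerivAt : ∀ x ∈ s, HasDerivAt y (y' x) x
  hasDerivAt_deriv : ∀ x ∈ s, HasDerivAt y' (q x * y x) x

namespace SolvesSchrodingerOn

variable {q p y y' z z' : 𝕂 → R} {s : Set 𝕂}

protected theorem continuousOn (hy : SolvesSchrodingerOn q y y' s) : ContinuousOn y s :=
  HasDerivAt.continuousOn hy.hasDerivAt

theorem congr_potential (hy : SolvesSchrodingerOn q y y' s) (hqp : EqOn q p s) :
    SolvesSchrodingerOn p y y' s where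
  hasDerivAt := hy.hasDerivAt
  hasDerivAt_deriv x hx := by simpa only [hqp hx] using hy.hasDerivAt_deriv x hx

theorem sub (hy : SolvesSchrodingerOn q y y' s) (hz : SolvesSchrodingerOn q z z' s) :
    SolvesSchrodingerOn q (fun x => y x - z x) (fun x => y' x - z' x) s where
  hasDerivAt x hx := (hy.hasDerivAt x hx).sub (hz.hasDerivAt x hx)
  hasDerivAt_deriv x hx := by
    simpa only [mul_sub] using (hy.hasDerivAt_deriv x hx).fun_sub (hz.hasDerivAt_deriv x hx)

theorem const_mul (c : R) (hy : SolvesSchrodingerOn q y y' s) :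
    SolvesSchrodingerOn q (fun x => c * y x) (fun x => c * y' x) s where
  hasDerivAt x hx := (hy.hasDerivAt x hx).const_mul c
  hasDerivAt_deriv x hx := by
    simpa only [mul_left_comm] using (hy.hasDerivAt_deriv x hx).const_mul c

theorem comp_const_mul_ofReal {q y y' : ℂ → ℂ} {S : Set ℂ} {s : Set ℝ} {k : ℂ}
    (hy : SolvesSchrodingerOn q y y' S) (hk : MapsTo (fun x : ℝ => k * x) s S) :
    SolvesSchrodingerOn (fun x : ℝ => k ^ 2 * q (k * x)) (fun x => y (k * x))
      (fun x => k * y' (k * x)) s := by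
  have chain_rule {g : ℂ → ℂ} {g' : ℂ} {x : ℝ} (hg : HasDerivAt g g' (k * x)) :
      HasDerivAt (fun x : ℝ => g (k * x)) (k * g') x := by
    simpa only [mul_one, mul_comm g'] using!
      (hg.comp (x : ℂ) ((hasDerivAt_id (x : ℂ)).const_mul k)).comp_ofReal
  refine ⟨fun x hx => chain_rule (hy.hasDerivAt _ (hk hx)), fun x hx => ?_⟩
  exact ((chain_rule (hy.hasDerivAt_deriv _ (hk hx))).const_mul k).congr_deriv (by ring)

end SolvesSchrodingerOn

end SecondOrderEquation

section Bessel

/-- The derivative of `𝓘_m`, expressed through `𝓘_m` and `𝓘_{m+1}`. -/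
noncomputable def besselI1dDeriv (m z : ℂ) : ℂ :=
  (m + 1 / 2) / z * besselI1d m z + besselI1d (m + 1) z

/-- The derivative of `𝓚_m`. -/
noncomputable def macdonaldK1dDeriv (m z : ℂ) : ℂ :=
  (besselI1dDeriv (-m) z - besselI1dDeriv m z) / sin (Real.pi * m)

theorem besselI1d_add_one (m : ℂ) {z : ℂ} (hz : z ≠ 0) :
    besselI1d (m + 1) z =
      Real.sqrt Real.pi * (z / 2) ^ (1 / 2 + m) * (z / 2 * zeroF1reg (m + 2) (z ^ 2 / 4)) := by
  rw [besselI1d, ← add_assoc, cpow_add _ _ (div_ne_zero hz two_ne_zero), cpow_one,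
    add_assoc m 1 1, one_add_one_eq_two]
  ring

theorem besselI1d_eq_add (m : ℂ) {z : ℂ} (hz : z ≠ 0) :
    besselI1d m z = 2 * (m + 1) / z * besselI1d (m + 1) z + besselI1d (m + 2) z := by
  have recurrence := zeroF1reg_eq_add (m + 1) (z ^ 2 / 4)
  rw [add_assoc m 1 1, one_add_one_eq_two] at recurrence
  rw [show m + 2 = m + 1 + 1 by ring, besselI1d_add_one (m + 1) hz, ← add_assoc,
    cpow_add _ _ (div_ne_zero hz two_ne_zero), cpow_one, besselI1d_add_one m hz, besselI1d,
    recurrence, add_right_comm m 1 2]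
  field_simp
  ring

theorem hasDerivAt_besselI1d (m : ℂ) {z : ℂ} (hz : z ∈ slitPlane) :
    HasDerivAt (besselI1d m) (besselI1dDeriv m z) z := by
  have z_ne_zero : z ≠ 0 := slitPlane_ne_zero hz
  have half_mem : z / 2 ∈ slitPlane := by
    simpa [mem_slitPlane_iff] using hz
  have deriv_pow : HasDerivAt (fun z : ℂ => (z / 2) ^ (1 / 2 + m))
      ((z / 2) ^ (1 / 2 + m) * ((m + 1 / 2) / z)) z := by
    refine (((hasDerivAt_id z).div_const 2).cpow_const half_mem).congr_deriv ?_
    rw [id, cpow_sub _ _ (div_ne_zero z_ne_zero two_ne_zero), cpow_one]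
    field_simp
    ring
  have deriv_series : HasDerivAt (fun z : ℂ => zeroF1reg (m + 1) (z ^ 2 / 4))
      (z / 2 * zeroF1reg (m + 2) (z ^ 2 / 4)) z := by
    refine ((hasDerivAt_zeroF1reg (m + 1) (z ^ 2 / 4)).comp z
      ((hasDerivAt_pow 2 z).div_const 4)).congr_deriv ?_
    rw [add_assoc m 1 1, one_add_one_eq_two]
    push_cast
    ring
  refine ((deriv_pow.const_mul _).mul deriv_series).congr_deriv ?_
  rw [besselI1dDeriv, besselI1d_add_one m z_ne_zero, besselI1d]
  ring

theorem solvesSchrodingerOn_besselI1d (m : ℂ) :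
    SolvesSchrodingerOn (fun z => (m ^ 2 - 1 / 4) / z ^ 2 + 1) (besselI1d m) (besselI1dDeriv m)
      slitPlane where
  hasDerivAt _ hz := hasDerivAt_besselI1d m hz
  hasDerivAt_deriv z hz := by
    have z_ne_zero : z ≠ 0 := slitPlane_ne_zero hz
    refine ((((hasDerivAt_inv z_ne_zero).const_mul (m + 1 / 2)).mul
      (hasDerivAt_besselI1d m hz)).add (hasDerivAt_besselI1d (m + 1) hz)).congr_deriv ?_
    have recurrence := besselI1d_eq_add m z_ne_zero
    rw [besselI1dDeriv, besselI1dDeriv, add_assoc m 1 1, one_add_one_eq_two]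
    field_simp at recurrence ⊢
    linear_combination -16 * z * recurrence

theorem solvesSchrodingerOn_macdonaldK1d (m : ℂ) :
    SolvesSchrodingerOn (fun z => (m ^ 2 - 1 / 4) / z ^ 2 + 1) (macdonaldK1d m)
      (macdonaldK1dDeriv m) slitPlane := by
  have solves_neg := solvesSchrodingerOn_besselI1d (-m)
  simp only [neg_sq] at solves_neg
  simpa only [inv_mul_eq_div] using!
    (solves_neg.sub (solvesSchrodingerOn_besselI1d m)).const_mul (sin (Real.pi * m))⁻¹

theorem besselI1d_mul_besselI1d (a b : ℂ) {z : ℂ} (hz : z ≠ 0) :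
    besselI1d a z * besselI1d b z =
      Real.pi * (z / 2) ^ (1 + a + b) *
        (zeroF1reg (a + 1) (z ^ 2 / 4) * zeroF1reg (b + 1) (z ^ 2 / 4)) := by
  have sqrt_mul_sqrt : (Real.sqrt Real.pi : ℂ) * Real.sqrt Real.pi = Real.pi := by
    rw [← ofReal_mul, Real.mul_self_sqrt Real.pi_pos.le]
  rw [show 1 + a + b = (1 / 2 + a) + (1 / 2 + b) by ring,
    cpow_add _ _ (div_ne_zero hz two_ne_zero), ← sqrt_mul_sqrt, besselI1d, besselI1d]
  ring

theorem besselI1d_mul_sub_eq_neg_sin (m : ℂ) {z : ℂ} (hz : z ≠ 0) :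
    besselI1d m z * besselI1d (-m - 1) z - besselI1d (m + 1) z * besselI1d (-m) z =
      -sin (Real.pi * m) := by
  have pi_ne_zero : (Real.pi : ℂ) ≠ 0 := ofReal_ne_zero.2 Real.pi_ne_zero
  have series := zeroF1reg_mul_sub_eq_sin_div_pi (m + 1) (z ^ 2 / 4)
  rw [mul_add, mul_one, sin_add_pi] at series
  rw [besselI1d_mul_besselI1d _ _ hz, besselI1d_mul_besselI1d _ _ hz,
    show 1 + m + (-m - 1) = 0 by ring, show 1 + (m + 1) + -m = (2 : ℕ) by push_cast; ring,
    cpow_zero, cpow_natCast, show -m - 1 + 1 = 1 - (m + 1) by ring,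
    show -m + 1 = 2 - (m + 1) by ring]
  field_simp at series ⊢
  linear_combination series

theorem besselI1d_wronskian_neg (m : ℂ) {z : ℂ} (hz : z ≠ 0) :
    besselI1d m z * besselI1dDeriv (-m) z - besselI1dDeriv m z * besselI1d (-m) z =
      -sin (Real.pi * m) := by
  have recurrence := besselI1d_eq_add (-m - 1) hz
  rw [sub_add_cancel, show -m - 1 + 2 = -m + 1 by ring] at recurrence
  rw [← besselI1d_mul_sub_eq_neg_sin m hz, besselI1dDeriv, besselI1dDeriv, recurrence]
  ring

theorem besselI1d_macdonaldK1d_wronskian {m z : ℂ} (hm : ∀ n : ℤ, m ≠ n) (hz : z ≠ 0) :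
    besselI1d m z * macdonaldK1dDeriv m z - besselI1dDeriv m z * macdonaldK1d m z = -1 := by
  have sin_ne_zero : sin (Real.pi * m) ≠ 0 :=
    sin_pi_mul_ne_zero fun ⟨n, hn⟩ => hm n hn.symm
  rw [macdonaldK1dDeriv, macdonaldK1d, ← mul_div_assoc, ← mul_div_assoc, ← sub_div,
    div_eq_iff sin_ne_zero, neg_one_mul, ← besselI1d_wronskian_neg m hz]
  ring

end Bessel

section Green

theorem hasDerivAt_integral_Ioi {E : Type*} [NormedAddCommGroup E] [NormedSpace ℝ E]
    [CompleteSpace E] {g : ℝ → E} {a x : ℝ} (hg : IntegrableOn g (Ioi a)) (hax : a < x)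
    (hgx : ContinuousAt g x) : HasDerivAt (fun x => ∫ y in Ioi x, g y) (-g x) x := by
  have integral_eq :
      (fun x => ∫ y in Ioi x, g y) =ᶠ[𝓝 x] fun x => (∫ y in Ioi a, g y) - ∫ y in a..x, g y := by
    filter_upwards [Ioi_mem_nhds hax] with t ht
    rw [← intervalIntegral.integral_Ioi_sub_Ioi hg (le_of_lt ht), sub_sub_cancel]
  have intervalIntegrable : IntervalIntegrable g volume a x :=
    (intervalIntegrable_iff_integrableOn_Ioc_of_le hax.le).2 (hg.mono_set Ioc_subset_Ioi_self)
  refine HasDerivAt.congr_of_eventuallyEq ?_ integral_eq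
  exact (intervalIntegral.integral_hasDerivAt_right intervalIntegrable
    ⟨Ioi a, Ioi_mem_nhds hax, hg.aestronglyMeasurable⟩ hgx).const_sub _

theorem contDiffOn_two_of_hasDerivAt {𝕂 F : Type*} [NontriviallyNormedField 𝕂]
    [NormedAddCommGroup F] [NormedSpace 𝕂 F] {u v w : 𝕂 → F} {s : Set 𝕂} (hs : IsOpen s)
    (huv : ∀ x ∈ s, HasDerivAt u (v x) x) (hvw : ∀ x ∈ s, HasDerivAt v (w x) x)
    (hw : ContinuousOn w s) : ContDiffOn 𝕂 2 u s := by
  have contDiffOn_v : ContDiffOn 𝕂 1 v s := by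
    rw [← zero_add (1 : WithTop ℕ∞), contDiffOn_succ_iff_deriv_of_isOpen hs, contDiffOn_zero]
    exact ⟨fun x hx => (hvw x hx).differentiableAt.differentiableWithinAt, by simp,
      hw.congr fun x hx => (hvw x hx).deriv⟩
  rw [← one_add_one_eq_two, contDiffOn_succ_iff_deriv_of_isOpen hs]
  exact ⟨fun x hx => (huv x hx).differentiableAt.differentiableWithinAt, by simp,
    contDiffOn_v.congr fun x hx => (huv x hx).deriv⟩

/-- The Green kernel built from two solutions `A`, `B` of a second order equation. It is normalized
for a Wronskian `A B' - A' B` equal to `-1`. -/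
def greenKernel {α R : Type*} [LinearOrder α] [Mul R] (A B : α → R) (x y : α) : R :=
  A (min x y) * B (max x y)

variable {𝕜 E : Type*} [RCLike 𝕜] [NormedAddCommGroup E] [NormedSpace ℝ E] [NormedSpace 𝕜 E]
  [IsScalarTower ℝ 𝕜 E] {a : ℝ} {q A A' B B' : ℝ → 𝕜} {f : ℝ → E}

/-- The integral operator on `]a, ∞[` with kernel `greenKernel A B`, applied to `f`. -/
noncomputable def greenPotential (A B : ℝ → 𝕜) (a : ℝ) (f : ℝ → E) (x : ℝ) : E :=
  ∫ y in Ioi a, greenKernel A B x y • f y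

theorem greenPotential_eq_add {x : ℝ} (hax : a ≤ x)
    (hAf : IntegrableOn (fun y => A y • f y) (Ioc a x))
    (hBf : IntegrableOn (fun y => B y • f y) (Ioi x)) :
    greenPotential A B a f x =
      B x • (∫ y in a..x, A y • f y) + A x • ∫ y in Ioi x, B y • f y := by
  have kernel_left : EqOn (fun y => B x • A y • f y) (fun y => greenKernel A B x y • f y)
      (Ioc a x) := fun y hy => by
    simp only [greenKernel, min_eq_right hy.2, max_eq_left hy.2, smul_smul, mul_comm (B x)]
  have kernel_right : EqOn (fun y => A x • B y • f y) (fun y => greenKernel A B x y • f y)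
      (Ioi x) := fun y hy => by
    have hxy : x ≤ y := le_of_lt hy
    simp only [greenKernel, min_eq_left hxy, max_eq_right hxy, smul_smul]
  rw [greenPotential, ← Ioc_union_Ioi_eq_Ioi hax,
    setIntegral_union (Ioc_disjoint_Ioi le_rfl) measurableSet_Ioi
      (IntegrableOn.congr_fun (hAf.smul (B x)) kernel_left measurableSet_Ioc)
      (IntegrableOn.congr_fun (hBf.smul (A x)) kernel_right measurableSet_Ioi),
    ← setIntegral_congr_fun measurableSet_Ioc kernel_left,
    ← setIntegral_congr_fun measurableSet_Ioi kernel_right, integral_smul, integral_smul,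
    intervalIntegral.integral_of_le hax]

variable [CompleteSpace E]

theorem hasDerivAt_smul_integral_add_smul_integral {C D : ℝ → 𝕜} {c d : 𝕜} {x : ℝ} (hax : a < x)
    (hC : HasDerivAt C c x) (hD : HasDerivAt D d x)
    (hA : ContinuousAt A x) (hB : ContinuousAt B x) (hf : ContinuousAt f x)
    (hAf : ∀ x > a, IntegrableOn (fun y => A y • f y) (Ioc a x))
    (hBf : ∀ x > a, IntegrableOn (fun y => B y • f y) (Ioi x)) :
    HasDerivAt (fun x => D x • (∫ y in a..x, A y • f y) + C x • ∫ y in Ioi x, B y • f y)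
      (d • (∫ y in a..x, A y • f y) + c • (∫ y in Ioi x, B y • f y) +
        (D x * A x - C x * B x) • f x) x := by
  have deriv_left : HasDerivAt (fun x => ∫ y in a..x, A y • f y) (A x • f x) x :=
    intervalIntegral.integral_hasDerivAt_right
      ((intervalIntegrable_iff_integrableOn_Ioc_of_le hax.le).2 (hAf x hax))
      ⟨Ioc a (x + 1), Ioc_mem_nhds hax (lt_add_one x),
        (hAf (x + 1) (hax.trans (lt_add_one x))).aestronglyMeasurable⟩ (hA.smul hf)
  obtain ⟨b, hab, hbx⟩ := exists_between hax
  have deriv_right : HasDerivAt (fun x => ∫ y in Ioi x, B y • f y) (-(B x • f x)) x :=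
    hasDerivAt_integral_Ioi (hBf b hab) hbx (hB.smul hf)
  refine ((hD.smul deriv_left).add (hC.smul deriv_right)).congr_deriv ?_
  module

theorem greenPotential_solves (hA : SolvesSchrodingerOn q A A' (Ioi a))
    (hB : SolvesSchrodingerOn q B B' (Ioi a)) (hq : ContinuousOn q (Ioi a))
    (hW : ∀ x > a, A x * B' x - A' x * B x = -1) (hf : ContinuousOn f (Ioi a))
    (hAf : ∀ x > a, IntegrableOn (fun y => A y • f y) (Ioc a x))
    (hBf : ∀ x > a, IntegrableOn (fun y => B y • f y) (Ioi x)) :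
    ContDiffOn ℝ 2 (greenPotential A B a f) (Ioi a) ∧
      ∀ x > a, deriv (deriv (greenPotential A B a f)) x = q x • greenPotential A B a f x - f x := by
  let u := greenPotential A B a f
  let v (x : ℝ) : E := B' x • (∫ y in a..x, A y • f y) + A' x • ∫ y in Ioi x, B y • f y
  have u_eq (x : ℝ) (hx : a < x) :
      u x = B x • (∫ y in a..x, A y • f y) + A x • ∫ y in Ioi x, B y • f y :=
    greenPotential_eq_add hx.le (hAf x hx) (hBf x hx)
  have deriv_u (x : ℝ) (hx : a < x) : HasDerivAt u (v x) x := by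
    have deriv_A := hA.hasDerivAt x hx
    have deriv_B := hB.hasDerivAt x hx
    refine ((hasDerivAt_smul_integral_add_smul_integral hx deriv_A deriv_B deriv_A.continuousAt
      deriv_B.continuousAt (hf.continuousAt (Ioi_mem_nhds hx)) hAf hBf).congr_of_eventuallyEq
      (Filter.eventually_of_mem (Ioi_mem_nhds hx) u_eq)).congr_deriv ?_
    rw [mul_comm (B x), sub_self, zero_smul, add_zero]
  have deriv_v (x : ℝ) (hx : a < x) : HasDerivAt v (q x • u x - f x) x := by
    refine (hasDerivAt_smul_integral_add_smul_integral hx (hA.hasDerivAt_deriv x hx)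
      (hB.hasDerivAt_deriv x hx) (hA.hasDerivAt x hx).continuousAt
      (hB.hasDerivAt x hx).continuousAt (hf.continuousAt (Ioi_mem_nhds hx)) hAf hBf).congr_deriv ?_
    rw [mul_comm (B' x), hW x hx, u_eq x hx]
    module
  have continuousOn_u : ContinuousOn u (Ioi a) := HasDerivAt.continuousOn deriv_u
  refine ⟨contDiffOn_two_of_hasDerivAt isOpen_Ioi deriv_u deriv_v
    ((hq.smul continuousOn_u).sub hf), fun x hx => ?_⟩
  have deriv_u_eq : deriv u =ᶠ[𝓝 x] v :=
    Filter.eventually_of_mem (Ioi_mem_nhds hx) fun y hy => (deriv_u y hy).deriv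
  exact deriv_u_eq.deriv_eq.trans (deriv_v x hx).deriv

end Green

theorem integrable_smul_of_tsupport_subset {X 𝕜 E : Type*} [TopologicalSpace X]
    [MeasurableSpace X] [OpensMeasurableSpace X] {μ : Measure X}
    [IsFiniteMeasureOnCompacts μ] [NormedField 𝕜] [NormedAddCommGroup E] [NormedSpace 𝕜 E]
    {s : Set X} {g : X → 𝕜} {f : X → E} (hg : ContinuousOn g s) (hf : Continuous f)
    (hfc : HasCompactSupport f) (hfs : tsupport f ⊆ s) : Integrable (fun x => g x • f x) μ := by
  have integrableOn : IntegrableOn (fun x => g x • f x) (tsupport f) μ :=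
    ((hg.mono hfs).smul hf.continuousOn).integrableOn_compact' hfc
      (isClosed_tsupport f).measurableSet
  refine (integrableOn_iff_integrable_of_support_subset ?_).1 integrableOn
  exact (Function.support_smul_subset_right g f).trans (subset_tsupport f)

section BesselResolvent

theorem mul_ofReal_mem_slitPlane {k : ℂ} (hk : k ∈ slitPlane) {x : ℝ} (hx : 0 < x) :
    k * x ∈ slitPlane := by
  rw [mem_slitPlane_iff, re_mul_ofReal, im_mul_ofReal]
  exact hk.imp (mul_pos · hx) (mul_ne_zero · hx.ne')

theorem SolvesSchrodingerOn.bessel_comp_mul_ofReal {m k : ℂ} {y y' : ℂ → ℂ}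
    (hy : SolvesSchrodingerOn (fun z => (m ^ 2 - 1 / 4) / z ^ 2 + 1) y y' slitPlane)
    (hk : k ∈ slitPlane) :
    SolvesSchrodingerOn (fun x : ℝ => (m ^ 2 - 1 / 4) / (x : ℂ) ^ 2 + k ^ 2)
      (fun x => y (k * x)) (fun x => k * y' (k * x)) (Ioi 0) := by
  refine (hy.comp_const_mul_ofReal fun x hx => mul_ofReal_mem_slitPlane hk hx).congr_potential
    fun x hx => ?_
  have k_ne_zero : k ≠ 0 := slitPlane_ne_zero hk
  have x_ne_zero : (x : ℂ) ≠ 0 := ofReal_ne_zero.2 (ne_of_gt hx)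
  field_simp

theorem solvesSchrodingerOn_besselI1d_comp_mul_ofReal (m : ℂ) {k : ℂ} (hk : k ∈ slitPlane) :
    SolvesSchrodingerOn (fun x : ℝ => (m ^ 2 - 1 / 4) / (x : ℂ) ^ 2 + k ^ 2)
      (fun x => besselI1d m (k * x)) (fun x => k * besselI1dDeriv m (k * x)) (Ioi 0) :=
  (solvesSchrodingerOn_besselI1d m).bessel_comp_mul_ofReal hk

theorem solvesSchrodingerOn_macdonaldK1d_comp_mul_ofReal (m : ℂ) {k : ℂ} (hk : k ∈ slitPlane) :
    SolvesSchrodingerOn (fun x : ℝ => (m ^ 2 - 1 / 4) / (x : ℂ) ^ 2 + k ^ 2)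
      (fun x => macdonaldK1d m (k * x)) (fun x => k * macdonaldK1dDeriv m (k * x)) (Ioi 0) :=
  (solvesSchrodingerOn_macdonaldK1d m).bessel_comp_mul_ofReal hk

theorem bessel_resolvent_kernel_solves_general {E : Type*} [NormedAddCommGroup E]
    [NormedSpace ℂ E] [CompleteSpace E] {m k : ℂ} (hm : ∀ n : ℤ, m ≠ n) (hk : k ∈ slitPlane)
    {G : ℝ → ℝ → ℂ}
    (hG : ∀ x y : ℝ, G x y =
      (1 / k) * besselI1d m (k * min x y) * macdonaldK1d m (k * max x y))
    {f : ℝ → E} (hf : ContinuousOn f (Ioi 0))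
    (hfI : ∀ x : ℝ, 0 < x → IntegrableOn (fun y : ℝ => besselI1d m (k * y) • f y) (Ioc 0 x))
    (hfK : ∀ x : ℝ, 0 < x → IntegrableOn (fun y : ℝ => macdonaldK1d m (k * y) • f y) (Ioi x)) :
    ContDiffOn ℝ 2 (fun x : ℝ => ∫ y in Ioi (0 : ℝ), G x y • f y) (Ioi (0 : ℝ)) ∧
    ∀ x : ℝ, 0 < x →
      -deriv (deriv fun x : ℝ => ∫ y in Ioi (0 : ℝ), G x y • f y) x +
          ((m ^ 2 - 1 / 4) / (x : ℂ) ^ 2) • (∫ y in Ioi (0 : ℝ), G x y • f y) +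
          k ^ 2 • (∫ y in Ioi (0 : ℝ), G x y • f y) = f x := by
  have k_ne_zero : k ≠ 0 := slitPlane_ne_zero hk
  obtain rfl : G = greenKernel (fun x : ℝ => besselI1d m (k * x))
      (fun x : ℝ => k⁻¹ * macdonaldK1d m (k * x)) := by
    ext x y
    rw [hG, greenKernel]
    ring
  have continuousOn_potential :
      ContinuousOn (fun x : ℝ => (m ^ 2 - 1 / 4) / (x : ℂ) ^ 2 + k ^ 2) (Ioi 0) := by
    have pow_ne_zero (x : ℝ) (hx : x ∈ Ioi 0) : (x : ℂ) ^ 2 ≠ 0 :=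
      pow_ne_zero 2 (ofReal_ne_zero.2 (ne_of_gt hx))
    fun_prop (disch := assumption)
  have wronskian (x : ℝ) (hx : 0 < x) :
      besselI1d m (k * x) * (k⁻¹ * (k * macdonaldK1dDeriv m (k * x))) -
        k * besselI1dDeriv m (k * x) * (k⁻¹ * macdonaldK1d m (k * x)) = -1 := by
    rw [← besselI1d_macdonaldK1d_wronskian hm
      (slitPlane_ne_zero (mul_ofReal_mem_slitPlane hk hx))]
    field_simp
  obtain ⟨contDiffOn, deriv_deriv⟩ := greenPotential_solves
    (solvesSchrodingerOn_besselI1d_comp_mul_ofReal m hk)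
    ((solvesSchrodingerOn_macdonaldK1d_comp_mul_ofReal m hk).const_mul k⁻¹)
    continuousOn_potential wronskian hf hfI
    (fun x hx => by simpa only [mul_smul] using! (hfK x hx).smul k⁻¹)
  refine ⟨contDiffOn, fun x hx => ?_⟩
  unfold greenPotential at deriv_deriv
  rw [deriv_deriv x hx]
  module

end BesselResolvent

/-- the Bessel resolvent kernel
`G(x,y) = k⁻¹ 𝓘_m(k min(x,y)) 𝓚_m(k max(x,y))` inverts `-∂² + (m²-1/4)x⁻² + k²` on
continuous compactly supported test functions in `]0,∞[`. -/
theorem bessel_resolvent_kernel_solves (m k : ℂ) (hm : ∀ n : ℤ, m ≠ (n : ℂ))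
    (hmre : -1 < m.re) (hk : 0 < k.re)
    (G : ℝ → ℝ → ℂ)
    (hG : ∀ x y : ℝ, G x y =
      (1 / k) * besselI1d m (k * min x y) * macdonaldK1d m (k * max x y))
    (f : ℝ → ℂ) (hf : Continuous f) (hfc : HasCompactSupport f)
    (hfs : tsupport f ⊆ Ioi (0 : ℝ)) :
    ContDiffOn ℝ 2 (fun x : ℝ => ∫ y in Ioi (0 : ℝ), G x y * f y) (Ioi (0 : ℝ)) ∧
    ∀ x : ℝ, 0 < x →
      -deriv (deriv fun x : ℝ => ∫ y in Ioi (0 : ℝ), G x y * f y) x +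
          (m ^ 2 - 1 / 4) / (x : ℂ) ^ 2 * (∫ y in Ioi (0 : ℝ), G x y * f y) +
          k ^ 2 * (∫ y in Ioi (0 : ℝ), G x y * f y) = f x := by
  have hk' : k ∈ slitPlane := mem_slitPlane_iff.2 (.inl hk)
  exact bessel_resolvent_kernel_solves_general hm hk' hG hf.continuousOn
    (fun _ _ => (integrable_smul_of_tsupport_subset
      (solvesSchrodingerOn_besselI1d_comp_mul_ofReal m hk').continuousOn
      hf hfc hfs).integrableOn)
    (fun _ _ => (integrable_smul_of_tsupport_subset
      (solvesSchrodingerOn_macdonaldK1d_comp_mul_ofReal m hk').continuousOn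
      hf hfc hfs).integrableOn)
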